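/- On the Weierstrass curve W : y² + t²xy + y = x³ over the rational function field F = 𝔽₂(t), the point (1/t², 1/t³) is a nonsingular point of order exactly 2 in the group of points of W. -/

import Mathlib

/-- The rational function field `F = 𝔽₂(t)`. -/
noncomputable abbrev F : Type := RatFunc (ZMod 2)

/-- The variable `t` of `𝔽₂(t)`. -/
noncomputable def t : F := RatFunc.X

/-- The Weierstrass curve `W : y² + t²xy + y = x³` over `𝔽₂(t)`. -/
noncomputable def W : WeierstrassCurve.Affine F :=
  { a₁ := t ^ 2, a₂ := 0, a₃ := 1, a₄ := 0, a₆ := 0 }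

theorem two_eq_zero_F : (2 : F) = 0 := by
  have h : ((2 : ZMod 2)) = 0 := by decide
  have := congrArg (algebraMap (ZMod 2) F) h
  simpa only [map_ofNat, map_zero] using this

theorem t_ne_zero : t ≠ 0 := RatFunc.X_ne_zero

theorem t_pow_three_ne_one : t ^ 3 ≠ 1 := by
  intro h
  have h' : algebraMap (Polynomial (ZMod 2)) F (Polynomial.X ^ 3)
      = algebraMap (Polynomial (ZMod 2)) F 1 := by
    rw [map_pow, map_one, RatFunc.algebraMap_X]
    exact h
  have h2 := RatFunc.algebraMap_injective (ZMod 2) h'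
  have h3 := congrArg Polynomial.natDegree h2
  simp at h3

theorem point_y_eq : 1 / t ^ 3 = W.negY (1 / t ^ 2) (1 / t ^ 3) := by
  have ht := t_ne_zero
  have h2 := two_eq_zero_F
  simp only [WeierstrassCurve.Affine.negY, W]
  field_simp
  linear_combination (1 + t ^ 3) * h2

theorem point_nonsingular : W.Nonsingular (1 / t ^ 2) (1 / t ^ 3) := by
  have ht := t_ne_zero
  have h2 := two_eq_zero_F
  rw [WeierstrassCurve.Affine.nonsingular_iff, WeierstrassCurve.Affine.equation_iff]
  refine ⟨?_, Or.inl ?_⟩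
  · simp only [W]
    field_simp
    linear_combination t ^ 3 * h2
  · simp only [W]
    intro h
    field_simp at h
    apply t_pow_three_ne_one
    linear_combination h + h2

open scoped Classical in
/-- On `W : y² + t²xy + y = x³` over `𝔽₂(t)`, the point `(1/t², 1/t³)` is a nonsingular
point of order exactly 2 in the group of points of `W`. -/
theorem point_inv_has_order_two :
    ∃ h : W.Nonsingular (1 / t ^ 2) (1 / t ^ 3),
      addOrderOf (WeierstrassCurve.Affine.Point.some _ _ h) = 2 := by
  refine ⟨point_nonsingular, ?_⟩
  apply addOrderOf_eq_prime
  · rw [two_nsmul]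
    exact WeierstrassCurve.Affine.Point.add_self_of_Y_eq point_y_eq
  · exact WeierstrassCurve.Affine.Point.some_ne_zero _
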